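/- arXiv:1905.08075 — 2 statements merged into one kernel-verified Lean document; each statement's English description precedes it below -/
import Mathlib

section
/- Let F be a non-constant polynomial in one variable with integer coefficients. Then the set X := { k ∈ ℕ : F(k) is a prime element of ℤ (i.e., |F(k)| is a prime number) } is small. -/
open Set Filter Topology

/-- An upper quasi-density on ℕ. -/
def IsUpperQuasiDensity (μ : Set ℕ → ℝ) : Prop :=
  μ Set.univ = 1 ∧
  (∀ X : Set ℕ, μ X ≤ 1) ∧
  (∀ X Y : Set ℕ, μ (X ∪ Y) ≤ μ X + μ Y) ∧
  (∀ (X : Set ℕ) (k : ℕ), 0 < k → μ ((fun x => k * x) '' X) = μ X / k) ∧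
  (∀ (X : Set ℕ) (h : ℕ), μ ((fun x => x + h) '' X) = μ X)

/-- An upper density on ℕ: a monotone upper quasi-density. -/
def IsUpperDensity (μ : Set ℕ → ℝ) : Prop :=
  IsUpperQuasiDensity μ ∧ ∀ X Y : Set ℕ, X ⊆ Y → μ X ≤ μ Y

/-- A set of naturals is small if every upper quasi-density vanishes on it. -/
def SmallSet (X : Set ℕ) : Prop :=
  ∀ μ : Set ℕ → ℝ, IsUpperQuasiDensity μ → μ X = 0

/-- The upper asymptotic density of a set of naturals. -/
noncomputable def upperAsymptoticDensity (X : Set ℕ) : ℝ :=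
  limsup (fun n : ℕ => ((X ∩ Set.Icc 1 n).ncard : ℝ) / n) atTop

/-- The arithmetic progression k·ℕ + h. -/
def AP (k h : ℕ) : Set ℕ := {x : ℕ | ∃ m : ℕ, x = k * m + h}

/-- A finite union of arithmetic progressions of ℕ. -/
def IsFinUnionAP (A : Set ℕ) : Prop :=
  ∃ s : Finset (ℕ × ℕ), (∀ p ∈ s, 0 < p.1) ∧ A = ⋃ p ∈ s, AP p.1 p.2

/-- The upper Buck density of a set of naturals. -/
noncomputable def buckDensity (X : Set ℕ) : ℝ :=
  sInf {d : ℝ | ∃ A : Set ℕ, IsFinUnionAP A ∧ X ⊆ A ∧ d = upperAsymptoticDensity A}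

/-- `rk k X` is the number of residues h ∈ [0, k-1] with X ∩ (k·ℕ + h) ≠ ∅. -/
noncomputable def rk (k : ℕ) (X : Set ℕ) : ℕ :=
  {h : ℕ | h < k ∧ (X ∩ AP k h).Nonempty}.ncard

/-- `wk μ k S` is the number of residues h ∈ [0, k-1] with μ(S ∩ (k·ℕ + h)) ≠ 0. -/
noncomputable def wk (μ : Set ℕ → ℝ) (k : ℕ) (S : Set ℕ) : ℕ :=
  {h : ℕ | h < k ∧ μ (S ∩ AP k h) ≠ 0}.ncard


section IdealSum
open NumberField nonZeroDivisors

variable (K : Type) [Field K] [NumberField K]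

/-- nonzero ideals of norm at most n avoiding the primes in T -/
noncomputable def avoidSet (n : ℕ) (T : Finset (Ideal (𝓞 K))) : Finset (Ideal (𝓞 K)) := by
  classical
  exact (Ideal.finite_setOfPred_absNorm_le (S := 𝓞 K) n).toFinset.filter
    (fun I => I ≠ 0 ∧ ∀ P ∈ T, ¬ P ∣ I)

variable {K}

theorem mem_avoidSet {n : ℕ} {T : Finset (Ideal (𝓞 K))} {I : Ideal (𝓞 K)} :
    I ∈ avoidSet K n T ↔ Ideal.absNorm I ≤ n ∧ I ≠ 0 ∧ ∀ P ∈ T, ¬ P ∣ I := by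
  simp [avoidSet]

theorem sum_dvd_le (n : ℕ) (T : Finset (Ideal (𝓞 K))) (P : Ideal (𝓞 K)) (hP : Prime P) 
    [DecidablePred (fun I => P ∣ I)] :
    ∑ I ∈ (avoidSet K n T).filter (fun I => P ∣ I), ((Ideal.absNorm I : ℝ))⁻¹ ≤
      ((Ideal.absNorm P : ℝ))⁻¹ * ∑ I ∈ avoidSet K n T, ((Ideal.absNorm I : ℝ))⁻¹ := by
  classical
  have hsub : (avoidSet K n T).filter (fun I => P ∣ I) ⊆ (avoidSet K n T).image (fun J => P * J) := by
    intro I hI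
    rw [Finset.mem_filter, mem_avoidSet] at hI
    obtain ⟨⟨h1, h2, h3⟩, J, rfl⟩ := hI
    rw [Finset.mem_image]
    refine ⟨J, mem_avoidSet.2 ⟨?_, right_ne_zero_of_mul h2, fun Q hQ h => h3 Q hQ (h.mul_left P)⟩, rfl⟩
    rw [map_mul] at h1
    have : Ideal.absNorm P ≠ 0 := by
      rw [Ne, Ideal.absNorm_eq_zero_iff]; exact hP.ne_zero
    exact le_trans (Nat.le_mul_of_pos_left _ (Nat.pos_of_ne_zero this)) h1
  refine (Finset.sum_le_sum_of_subset_of_nonneg hsub (fun _ _ _ => by positivity)).trans ?_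
  rw [Finset.sum_image (fun a _ b _ h => mul_left_cancel₀ hP.ne_zero h), Finset.mul_sum]
  refine Finset.sum_le_sum fun J _ => ?_
  rw [map_mul, Nat.cast_mul, mul_inv]

theorem two_le_absNorm (P : Ideal (𝓞 K)) (hP : Prime P) : 2 ≤ Ideal.absNorm P := by
  have h0 : Ideal.absNorm P ≠ 0 := by
    rw [Ne, Ideal.absNorm_eq_zero_iff]; exact hP.ne_zero
  have h1 : Ideal.absNorm P ≠ 1 := by
    rw [Ne, Ideal.absNorm_eq_one_iff]; 
    intro h; exact hP.not_isUnit (by rw [h]; simp)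
  omega

theorem sum_insert_le (n : ℕ) (T : Finset (Ideal (𝓞 K))) (P : Ideal (𝓞 K)) (hP : Prime P)
    [DecidableEq (Ideal (𝓞 K))] :
    ∑ I ∈ avoidSet K n T, ((Ideal.absNorm I : ℝ))⁻¹ ≤
      2 * ∑ I ∈ avoidSet K n (insert P T), ((Ideal.absNorm I : ℝ))⁻¹ := by
  classical
  have h1 := sum_dvd_le n T P hP
  have h2 := Finset.sum_filter_add_sum_filter_not (avoidSet K n T) (fun I => P ∣ I)
    (fun I => ((Ideal.absNorm I : ℝ))⁻¹)
  have h3 : (avoidSet K n T).filter (fun I => ¬ P ∣ I) = avoidSet K n (insert P T) := by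
    ext I
    simp only [Finset.mem_filter, mem_avoidSet, Finset.mem_insert, forall_eq_or_imp]
    tauto
  rw [h3] at h2
  have h4 : ((Ideal.absNorm P : ℝ))⁻¹ ≤ 2⁻¹ :=
    inv_anti₀ (by norm_num) (by exact_mod_cast two_le_absNorm P hP)
  have h5 : 0 ≤ ∑ I ∈ avoidSet K n T, ((Ideal.absNorm I : ℝ))⁻¹ :=
    Finset.sum_nonneg (fun _ _ => by positivity)
  nlinarith

theorem sum_empty_le (n : ℕ) (T : Finset (Ideal (𝓞 K))) (hT : ∀ P ∈ T, Prime P) :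
    ∑ I ∈ avoidSet K n ∅, ((Ideal.absNorm I : ℝ))⁻¹ ≤
      2 ^ T.card * ∑ I ∈ avoidSet K n T, ((Ideal.absNorm I : ℝ))⁻¹ := by
  classical
  induction T using Finset.induction_on with
  | empty => simp
  | insert P T hPT ih =>
    refine (ih fun Q hQ => hT Q (Finset.mem_insert_of_mem hQ)).trans ?_
    rw [Finset.card_insert_of_notMem hPT, pow_succ, mul_assoc]
    gcongr
    exact sum_insert_le n T P (hT P (Finset.mem_insert_self _ _))

theorem sum_biUnion_le_aux {α β : Type*} [DecidableEq β] (s : Finset α) (t : α → Finset β)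
    (f : β → ℝ) (hf : ∀ b, 0 ≤ f b) : ∑ b ∈ s.biUnion t, f b ≤ ∑ a ∈ s, ∑ b ∈ t a, f b := by
  classical
  induction s using Finset.induction_on with
  | empty => simp
  | insert a s ha ih =>
    rw [Finset.biUnion_insert, Finset.sum_insert ha]
    have := Finset.sum_union_inter (s₁ := t a) (s₂ := s.biUnion t) (f := f)
    have h2 : 0 ≤ ∑ b ∈ t a ∩ s.biUnion t, f b := Finset.sum_nonneg fun b _ => hf b
    linarith

theorem sum_avoid_le_two (n : ℕ) (T : Finset (Ideal (𝓞 K)))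
    (hT : ∀ U : Finset (Ideal (𝓞 K)), (∀ P ∈ U, Prime P ∧ P ∉ T) →
      ∑ P ∈ U, ((Ideal.absNorm P : ℝ))⁻¹ ≤ 1 / 2) :
    ∑ I ∈ avoidSet K n T, ((Ideal.absNorm I : ℝ))⁻¹ ≤ 2 := by
  classical
  set U := (avoidSet K n ∅).filter (fun P => Prime P ∧ P ∉ T) with hU
  have hsub : avoidSet K n T ⊆ insert 1 (U.biUnion fun P => (avoidSet K n T).filter (fun I => P ∣ I)) := by
    intro I hI
    rw [Finset.mem_insert]
    by_cases h1 : I = 1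
    · exact Or.inl h1
    right
    have hI' := mem_avoidSet.1 hI
    obtain ⟨P, hP, hPI⟩ := WfDvdMonoid.exists_irreducible_factor (a := I)
      (by rwa [Ideal.isUnit_iff, ← Ideal.one_eq_top]) hI'.2.1
    rw [Finset.mem_biUnion]
    refine ⟨P, ?_, Finset.mem_filter.2 ⟨hI, hPI⟩⟩
    rw [hU, Finset.mem_filter, mem_avoidSet]
    refine ⟨⟨?_, hP.ne_zero, by simp⟩, hP.prime, fun h => hI'.2.2 P h hPI⟩
    refine (Nat.le_of_dvd (Nat.pos_of_ne_zero ?_) (map_dvd Ideal.absNorm hPI)).trans hI'.1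
    rw [Ne, Ideal.absNorm_eq_zero_iff]; exact hI'.2.1
  have h1 := Finset.sum_le_sum_of_subset_of_nonneg (f := fun I => ((Ideal.absNorm I : ℝ))⁻¹) hsub
    (fun _ _ _ => by positivity)
  have h2 : ∑ I ∈ insert 1 (U.biUnion fun P => (avoidSet K n T).filter (fun I => P ∣ I)),
      ((Ideal.absNorm I : ℝ))⁻¹ ≤ 1 + ∑ I ∈ (U.biUnion fun P => (avoidSet K n T).filter (fun I => P ∣ I)),
      ((Ideal.absNorm I : ℝ))⁻¹ := by
    by_cases h : (1 : Ideal (𝓞 K)) ∈ (U.biUnion fun P => (avoidSet K n T).filter (fun I => P ∣ I))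
    · rw [Finset.insert_eq_of_mem h]; linarith
    · rw [Finset.sum_insert h]; simp
  have h3 : ∑ I ∈ (U.biUnion fun P => (avoidSet K n T).filter (fun I => P ∣ I)),
      ((Ideal.absNorm I : ℝ))⁻¹ ≤ ∑ P ∈ U, ∑ I ∈ (avoidSet K n T).filter (fun I => P ∣ I),
      ((Ideal.absNorm I : ℝ))⁻¹ := by
    exact sum_biUnion_le_aux U _ _ (fun _ => by positivity)
  have h4 : ∑ P ∈ U, ∑ I ∈ (avoidSet K n T).filter (fun I => P ∣ I),
      ((Ideal.absNorm I : ℝ))⁻¹ ≤ ∑ P ∈ U, ((Ideal.absNorm P : ℝ))⁻¹ *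
        ∑ I ∈ avoidSet K n T, ((Ideal.absNorm I : ℝ))⁻¹ :=
    Finset.sum_le_sum fun P hP => sum_dvd_le n T P (Finset.mem_filter.1 hP).2.1
  rw [← Finset.sum_mul] at h4
  have h5 := hT U (fun P hP => (Finset.mem_filter.1 hP).2)
  have h6 : 0 ≤ ∑ I ∈ avoidSet K n T, ((Ideal.absNorm I : ℝ))⁻¹ :=
    Finset.sum_nonneg (fun _ _ => by positivity)
  nlinarith

theorem summable_ideals
    (h : Summable (fun P : {P : Ideal (𝓞 K) // Prime P} => ((Ideal.absNorm P.1 : ℝ))⁻¹)) :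
    Summable (fun I : (Ideal (𝓞 K))⁰ => ((Ideal.absNorm (I : Ideal (𝓞 K)) : ℝ))⁻¹) := by
  classical
  obtain ⟨T', hT'⟩ := h.vanishing (e := Metric.ball 0 (1/2)) (Metric.ball_mem_nhds _ (by norm_num))
  set T : Finset (Ideal (𝓞 K)) := T'.image Subtype.val with hTdef
  have hTp : ∀ P ∈ T, Prime P := by
    intro P hP
    obtain ⟨Q, _, rfl⟩ := Finset.mem_image.1 hP
    exact Q.2
  have hT : ∀ U : Finset (Ideal (𝓞 K)), (∀ P ∈ U, Prime P ∧ P ∉ T) →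
      ∑ P ∈ U, ((Ideal.absNorm P : ℝ))⁻¹ ≤ 1 / 2 := by
    intro U hU
    have := hT' (U.subtype Prime) (by
      rw [Finset.disjoint_left]
      intro P hP hPT
      exact (hU P.1 (Finset.mem_subtype.1 hP)).2 (Finset.mem_image_of_mem _ hPT))
    rw [Finset.sum_subtype_of_mem (fun P : Ideal (𝓞 K) => ((Ideal.absNorm P : ℝ))⁻¹)
      (fun P hP => (hU P hP).1)] at this
    rw [mem_ball_zero_iff, Real.norm_eq_abs] at this
    exact (le_abs_self _).trans this.le
  refine summable_of_sum_le (c := 2 ^ T.card * 2) (fun _ => by positivity) fun u => ?_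
  set n := u.sup (fun I => Ideal.absNorm (I : Ideal (𝓞 K)))
  have h1 := sum_empty_le n T hTp
  have h2 := sum_avoid_le_two n T hT
  have h3 : ∑ I ∈ u, ((Ideal.absNorm (I : Ideal (𝓞 K)) : ℝ))⁻¹ ≤
      ∑ I ∈ avoidSet K n ∅, ((Ideal.absNorm I : ℝ))⁻¹ := by
    rw [← Finset.sum_image (s := u) (g := Subtype.val) (f := fun I : Ideal (𝓞 K) => ((Ideal.absNorm I : ℝ))⁻¹)
      (Subtype.val_injective.injOn)]
    refine Finset.sum_le_sum_of_subset_of_nonneg ?_ (fun _ _ _ => by positivity)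
    intro I hI
    obtain ⟨J, hJ, rfl⟩ := Finset.mem_image.1 hI
    rw [mem_avoidSet]
    refine ⟨Finset.le_sup (f := fun I : (Ideal (𝓞 K))⁰ => Ideal.absNorm (I : Ideal (𝓞 K))) hJ, 
      nonZeroDivisors.ne_zero J.2, by simp⟩
  refine h3.trans (h1.trans ?_)
  gcongr

theorem not_summable_ideals :
    ¬ Summable (fun I : (Ideal (𝓞 K))⁰ => ((Ideal.absNorm (I : Ideal (𝓞 K)) : ℝ))⁻¹) := by
  classical
  intro h
  have key := (NumberField.Ideal.tendsto_norm_le_div_atTop₀ K).comp (tendsto_natCast_atTop_atTop (R := ℝ))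
  rw [← dedekindZeta_residue_def] at key
  have hlim : Tendsto (fun n : ℕ => ∑' I : (Ideal (𝓞 K))⁰,
      if Ideal.absNorm (I : Ideal (𝓞 K)) ≤ n then ((n : ℝ))⁻¹ else 0) atTop
      (𝓝 (∑' I : (Ideal (𝓞 K))⁰, (0 : ℝ))) := by
    refine tendsto_tsum_of_dominated_convergence h ?_ ?_
    · intro I
      refine squeeze_zero (fun n => by positivity) (fun n => ?_) tendsto_inv_atTop_nhds_zero_nat
      split_ifs
      · exact le_rfl
      · positivity
    · refine Eventually.of_forall fun n I => ?_
      split_ifs with h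
      · rw [Real.norm_of_nonneg (by positivity)]
        exact inv_anti₀ (by exact_mod_cast Ideal.absNorm_pos_of_nonZeroDivisors I) (by exact_mod_cast h)
      · simp
  rw [tsum_zero] at hlim
  have heq : (fun n : ℕ => ∑' I : (Ideal (𝓞 K))⁰,
      if Ideal.absNorm (I : Ideal (𝓞 K)) ≤ n then ((n : ℝ))⁻¹ else 0) = 
      (fun s : ℝ ↦ (Nat.card {I : (Ideal (𝓞 K))⁰ // Ideal.absNorm (I : Ideal (𝓞 K)) ≤ s} : ℝ) / s) ∘ (fun n : ℕ => (n : ℝ)) := by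
    funext n
    have hfin := Ideal.finite_setOfPred_absNorm_le₀ (S := 𝓞 K) n
    rw [tsum_eq_sum (s := hfin.toFinset) (by
      intro I hI
      rw [if_neg]
      simpa using hI)]
    rw [Finset.sum_congr rfl (g := fun _ => ((n : ℝ))⁻¹) (by
      intro I hI
      rw [if_pos]
      simpa using hI)]
    rw [Finset.sum_const, nsmul_eq_mul, Function.comp, div_eq_mul_inv, ← Nat.card_eq_card_finite_toFinset hfin]
    simp only [Nat.cast_le]
    rfl
  rw [heq] at hlim
  exact (dedekindZeta_residue_pos K).ne' (tendsto_nhds_unique key hlim)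

end IdealSum
section PrimeSum
open NumberField Polynomial

variable {K : Type} [Field K] [NumberField K]

theorem exists_root_of_norm_prime (F : ℤ[X]) (hF : 0 < F.natDegree) (α : K)
    (hα : aeval α F = 0) (P : Ideal (𝓞 K)) (p : ℕ) (hp : p.Prime)
    (hN : Ideal.absNorm P = p) (hc : ¬ (p : ℤ) ∣ F.leadingCoeff) :
    ∃ h : ℕ, (p : ℤ) ∣ F.eval (h : ℤ) := by
  have : Fact p.Prime := ⟨hp⟩
  have hF0 : F ≠ 0 := by rintro rfl; simp at hF
  have hcard : Nat.card (𝓞 K ⧸ P) = p := hN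
  have : Finite (𝓞 K ⧸ P) := Nat.finite_of_card_ne_zero (by rw [hcard]; exact hp.ne_zero)
  have := Fintype.ofFinite (𝓞 K ⧸ P)
  let f : 𝓞 K →+* ZMod p :=
    (ZMod.ringEquivOfPrime (𝓞 K ⧸ P) hp (by rw [← Nat.card_eq_fintype_card, hcard])).symm.toRingHom.comp
      (Ideal.Quotient.mk P)
  have h1 := integralNormalization_aeval_eq_zero (A := K) hα (fun x hx => by simpa using hx)
  have hint : IsIntegral ℤ (algebraMap ℤ K F.leadingCoeff * α) :=
    ⟨_, monic_integralNormalization hF0, h1⟩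
  let β : 𝓞 K := ⟨_, hint⟩
  have h2 : aeval β (integralNormalization F) = 0 := by
    apply FaithfulSMul.algebraMap_injective (𝓞 K) K
    rw [← aeval_algebraMap_apply, map_zero]
    exact h1
  have h3 : eval₂ (Int.castRingHom (ZMod p)) (f β) (integralNormalization F) = 0 := by
    have := congrArg f h2
    rw [aeval_def, hom_eval₂, map_zero] at this
    rw [← this]
    congr 1
    exact RingHom.ext_int _ _
  have hc' : (Int.castRingHom (ZMod p)) F.leadingCoeff ≠ 0 := by
    exact fun h => hc ((ZMod.intCast_zmod_eq_zero_iff_dvd _ _).1 h)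
  set x : ZMod p := f β / (Int.castRingHom (ZMod p)) F.leadingCoeff with hx
  have h4 := integralNormalization_eval₂_leadingCoeff_mul (p := F) hF (Int.castRingHom (ZMod p)) x
  rw [hx, mul_div_cancel₀ _ hc', h3, ← hx] at h4
  have h5 := (mul_eq_zero.1 h4.symm).resolve_left (pow_ne_zero _ hc')
  refine ⟨x.val, ?_⟩
  rw [← ZMod.intCast_zmod_eq_zero_iff_dvd]
  rw [← h5]
  have := hom_eval₂ F (RingHom.id ℤ) (Int.castRingHom (ZMod p)) (x.val : ℤ)
  simpa [eval₂_id] using this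

theorem card_primes_le (p : ℕ) (hp : p.Prime) (T : Finset (Ideal (𝓞 K)))
    (hT : ∀ P ∈ T, Prime P ∧ (p : 𝓞 K) ∈ P ∧ p ≤ Ideal.absNorm P) :
    T.card ≤ Module.finrank ℤ (𝓞 K) := by
  have h1 : ∏ P ∈ T, P ∣ Ideal.span {(p : 𝓞 K)} := by
    apply Finset.prod_primes_dvd
    · exact fun P hP => (hT P hP).1
    · intro P hP
      rw [Ideal.dvd_span_singleton]
      exact (hT P hP).2.1
  have h2 := map_dvd Ideal.absNorm h1
  rw [Ideal.absNorm_span_natCast, map_prod] at h2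
  have h3 := Nat.le_of_dvd (pow_pos hp.pos _) h2
  have h4 : p ^ T.card ≤ ∏ P ∈ T, Ideal.absNorm P :=
    Finset.pow_card_le_prod _ _ _ (fun P hP => (hT P hP).2.2)
  exact (Nat.pow_le_pow_iff_right hp.one_lt).1 (h4.trans h3)

theorem summable_primes (F : ℤ[X]) (hF : 0 < F.natDegree) (α : K)
    (hα : aeval α F = 0)
    (hS : Summable (Set.indicator {p : ℕ | p.Prime ∧ ∃ h : ℕ, (p : ℤ) ∣ F.eval (h : ℤ)}
      (fun p : ℕ => ((p : ℝ))⁻¹))) :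
    Summable (fun P : {P : Ideal (𝓞 K) // Prime P} => ((Ideal.absNorm P.1 : ℝ))⁻¹) := by
  classical
  have hF0 : F ≠ 0 := by rintro rfl; simp at hF
  have hex : ∀ P : {P : Ideal (𝓞 K) // Prime P}, ∃ p n : ℕ, 0 < n ∧ (p : 𝓞 K) ∈ P.1 ∧ p.Prime ∧
      Ideal.absNorm P.1 = p ^ n := by
    intro P
    have : P.1.IsMaximal := (Ideal.isPrime_of_prime P.2).isMaximal P.2.ne_zero
    exact Ideal.exists_prime_and_absNorm_eq_pow P.1
  choose p n hn hmem hp hN using hex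
  -- the finite exceptional set
  let E : Finset ℕ := F.leadingCoeff.natAbs.divisors
  let g : ℕ → ℝ := fun q => Set.indicator {p : ℕ | p.Prime ∧ ∃ h : ℕ, (p : ℤ) ∣ F.eval (h : ℤ)}
      (fun p : ℕ => ((p : ℝ))⁻¹) q + (((q : ℝ) ^ 2)⁻¹ + Set.indicator (E : Set ℕ) (fun p : ℕ => ((p : ℝ))⁻¹) q)
  have hg0 : ∀ q, 0 ≤ g q := by
    intro q
    have h1 := Set.indicator_nonneg (s := {p : ℕ | p.Prime ∧ ∃ h : ℕ, (p : ℤ) ∣ F.eval (h : ℤ)})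
      (f := (fun p : ℕ => ((p : ℝ))⁻¹)) (fun _ _ => by positivity) q
    have h2 := Set.indicator_nonneg (s := (E : Set ℕ))
      (f := (fun p : ℕ => ((p : ℝ))⁻¹)) (fun _ _ => by positivity) q
    have h3 : 0 ≤ ((q : ℝ) ^ 2)⁻¹ := by positivity
    exact add_nonneg h1 (add_nonneg h3 h2)
  have hg : Summable g := by
    refine hS.add (Summable.add (Real.summable_nat_pow_inv.2 (by norm_num)) ?_)
    refine summable_of_ne_finset_zero (s := E) fun q hq => ?_
    rw [Set.indicator_of_notMem]
    simpa using hq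
  have hle : ∀ P : {P : Ideal (𝓞 K) // Prime P}, ((Ideal.absNorm P.1 : ℝ))⁻¹ ≤ g (p P) := by
    intro P
    have h1 := Set.indicator_nonneg (s := {p : ℕ | p.Prime ∧ ∃ h : ℕ, (p : ℤ) ∣ F.eval (h : ℤ)})
      (f := (fun p : ℕ => ((p : ℝ))⁻¹)) (fun _ _ => by positivity) (p P)
    have h2 := Set.indicator_nonneg (s := (E : Set ℕ))
      (f := (fun p : ℕ => ((p : ℝ))⁻¹)) (fun _ _ => by positivity) (p P)
    have h3 : 0 ≤ ((p P : ℝ) ^ 2)⁻¹ := by positivity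
    have hpp : (0 : ℝ) < p P := by exact_mod_cast (hp P).pos
    by_cases hn2 : 2 ≤ n P
    · have : ((Ideal.absNorm P.1 : ℝ))⁻¹ ≤ ((p P : ℝ) ^ 2)⁻¹ := by
        apply inv_anti₀ (by positivity)
        rw [hN P]
        exact_mod_cast Nat.pow_le_pow_right (hp P).pos hn2
      simp only [g]
      linarith
    · have hn1 : n P = 1 := by have := hn P; omega
      have hNP : Ideal.absNorm P.1 = p P := by rw [hN P, hn1, pow_one]
      by_cases hd : (p P : ℤ) ∣ F.leadingCoeff
      · have : p P ∈ (E : Set ℕ) := by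
          simp only [E, Finset.mem_coe, Nat.mem_divisors]
          exact ⟨Int.natCast_dvd.1 hd, by simpa using hF0⟩
        have h4 := Set.indicator_of_mem this (fun p : ℕ => ((p : ℝ))⁻¹)
        simp only [g]
        rw [hNP]
        linarith
      · have h4 := Set.indicator_of_mem (s := {p : ℕ | p.Prime ∧ ∃ h : ℕ, (p : ℤ) ∣ F.eval (h : ℤ)})
          ⟨hp P, exists_root_of_norm_prime F hF α hα P.1 (p P) (hp P) hNP hd⟩
          (fun p : ℕ => ((p : ℝ))⁻¹)
        simp only [g]
        rw [hNP]
        linarith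
  refine summable_of_sum_le (c := Module.finrank ℤ (𝓞 K) * ∑' q, g q) (fun _ => by positivity) fun u => ?_
  calc ∑ P ∈ u, ((Ideal.absNorm P.1 : ℝ))⁻¹ ≤ ∑ P ∈ u, g (p P) := Finset.sum_le_sum fun P _ => hle P
    _ = ∑ q ∈ u.image p, (u.filter (fun P => p P = q)).card • g q := Finset.sum_comp g p
    _ ≤ ∑ q ∈ u.image p, Module.finrank ℤ (𝓞 K) * g q := by
        refine Finset.sum_le_sum fun q hq => ?_
        rw [nsmul_eq_mul]
        refine mul_le_mul_of_nonneg_right ?_ (hg0 q)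
        obtain ⟨P0, _, rfl⟩ := Finset.mem_image.1 hq
        have := card_primes_le (K := K) (p P0) (hp P0)
          ((u.filter (fun P => p P = p P0)).image Subtype.val) (by
            intro Q hQ
            obtain ⟨Q', hQ', rfl⟩ := Finset.mem_image.1 hQ
            have h := (Finset.mem_filter.1 hQ').2
            refine ⟨Q'.2, h ▸ hmem Q', ?_⟩
            rw [hN Q', h]
            exact Nat.le_self_pow (hn Q').ne' _)
        rw [Finset.card_image_of_injective _ Subtype.val_injective] at this
        exact_mod_cast this
    _ = Module.finrank ℤ (𝓞 K) * ∑ q ∈ u.image p, g q := by rw [Finset.mul_sum]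
    _ ≤ _ := by
        gcongr
        exact hg.sum_le_tsum _ (fun q _ => hg0 q)

end PrimeSum
theorem exists_numberField_root (F : Polynomial ℤ) (hF : 0 < F.natDegree) :
    ∃ (K : Type) (_ : Field K) (_ : NumberField K) (α : K), Polynomial.aeval α F = 0 := by
  have hF0 : F ≠ 0 := by rintro rfl; simp at hF
  let G : Polynomial ℚ := F.map (Int.castRingHom ℚ)
  have hd : G.natDegree = F.natDegree :=
    Polynomial.natDegree_map_eq_of_injective (Int.cast_injective) F
  have : NumberField G.SplittingField :=
    { to_charZero := charZero_of_injective_algebraMap (algebraMap ℚ _).injective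
      to_finiteDimensional := inferInstance }
  have hs := Polynomial.SplittingField.splits G
  obtain ⟨α, hα⟩ := hs.exists_eval_eq_zero (by 
    rw [Polynomial.degree_map]
    intro h
    have : G.natDegree = 0 := Polynomial.natDegree_eq_of_degree_eq_some h
    omega)
  refine ⟨G.SplittingField, inferInstance, inferInstance, α, ?_⟩
  rw [Polynomial.eval_map, Polynomial.eval₂_map] at hα
  rw [Polynomial.aeval_def, ← hα]
  congr 1

theorem not_summable_F (F : Polynomial ℤ) (hF : 0 < F.natDegree) :
    ¬ Summable (Set.indicator {p : ℕ | p.Prime ∧ ∃ h : ℕ, (p : ℤ) ∣ F.eval (h : ℤ)}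
      (fun p : ℕ => ((p : ℝ))⁻¹)) := by
  intro hS
  obtain ⟨K, _, _, α, hα⟩ := exists_numberField_root F hF
  exact not_summable_ideals (summable_ideals (summable_primes F hF α hα hS))

section Density

theorem qd_nonneg {μ : Set ℕ → ℝ} (hμ : IsUpperQuasiDensity μ) (X : Set ℕ) : 0 ≤ μ X := by
  have := hμ.2.2.1 X X
  rw [Set.union_self] at this
  linarith

theorem qd_empty {μ : Set ℕ → ℝ} (hμ : IsUpperQuasiDensity μ) : μ ∅ = 0 := by
  have := hμ.2.2.2.1 ∅ 2 (by norm_num)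
  rw [Set.image_empty] at this
  push_cast at this
  linarith

theorem qd_singleton {μ : Set ℕ → ℝ} (hμ : IsUpperQuasiDensity μ) (x : ℕ) : μ {x} = 0 := by
  have h0 : μ {0} = 0 := by
    have := hμ.2.2.2.1 {0} 2 (by norm_num)
    rw [Set.image_singleton, mul_zero] at this
    push_cast at this
    linarith
  have := hμ.2.2.2.2 {0} x
  rw [Set.image_singleton, zero_add] at this
  rw [this, h0]

theorem qd_finite {μ : Set ℕ → ℝ} (hμ : IsUpperQuasiDensity μ) (X : Set ℕ) (hX : X.Finite) : μ X = 0 := by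
  induction X, hX using Set.Finite.induction_on with
  | empty => exact qd_empty hμ
  | @insert a s _ _ ih =>
    have := hμ.2.2.1 {a} s
    rw [qd_singleton hμ, ih, Set.singleton_union] at this
    have h2 := qd_nonneg hμ (insert a s)
    linarith

theorem qd_biUnion_le {μ : Set ℕ → ℝ} (hμ : IsUpperQuasiDensity μ) (s : Finset ℕ) (f : ℕ → Set ℕ) :
    μ (⋃ h ∈ s, f h) ≤ ∑ h ∈ s, μ (f h) := by
  classical
  induction s using Finset.induction_on with
  | empty => simp [qd_empty hμ]
  | insert a s ha ih =>
    rw [Finset.set_biUnion_insert, Finset.sum_insert ha]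
    have := hμ.2.2.1 (f a) (⋃ h ∈ s, f h)
    linarith

theorem qd_avoid_le {μ : Set ℕ → ℝ} (hμ : IsUpperQuasiDensity μ) (S : Finset ℕ) (hS : ∀ p ∈ S, p.Prime) (Y : Set ℕ)
    (hY : ∀ p ∈ S, ∃ a : ZMod p, ∀ y ∈ Y, (y : ZMod p) ≠ a) :
    μ Y ≤ ∏ p ∈ S, (1 - (p : ℝ)⁻¹) := by
  classical
  induction S using Finset.induction_on generalizing Y with
  | empty => simpa using hμ.2.1 Y
  | insert p S hpS ih =>
    have hp : p.Prime := hS p (Finset.mem_insert_self _ _)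
    have : Fact p.Prime := ⟨hp⟩
    have hp0 : (0 : ℝ) < p := by exact_mod_cast hp.pos
    obtain ⟨a, ha⟩ := hY p (Finset.mem_insert_self _ _)
    let Z : ℕ → Set ℕ := fun h => {m | p * m + h ∈ Y}
    have hdec : Y = ⋃ h ∈ (Finset.range p).erase a.val,
        (fun x => x + h) '' ((fun x => p * x) '' Z h) := by
      ext y
      simp only [Set.mem_iUnion, Set.mem_image, Finset.mem_erase, Finset.mem_range]
      constructor
      · intro hy
        refine ⟨y % p, ⟨?_, Nat.mod_lt _ hp.pos⟩, p * (y / p), ⟨y / p, ?_, rfl⟩, Nat.div_add_mod y p⟩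
        · intro h
          apply ha y hy
          rw [← ZMod.natCast_zmod_val a, ← h, ZMod.natCast_mod]
        · change p * (y / p) + y % p ∈ Y
          rwa [Nat.div_add_mod]
      · rintro ⟨h, _, _, ⟨m, hm, rfl⟩, rfl⟩
        exact hm
    have hZ : ∀ h, μ (Z h) ≤ ∏ p ∈ S, (1 - (p : ℝ)⁻¹) := by
      intro h
      refine ih (fun q hq => hS q (Finset.mem_insert_of_mem hq)) _ fun q hq => ?_
      have hq' : q.Prime := hS q (Finset.mem_insert_of_mem hq)
      have : Fact q.Prime := ⟨hq'⟩
      obtain ⟨b, hb⟩ := hY q (Finset.mem_insert_of_mem hq)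
      have hpq : (p : ZMod q) ≠ 0 := by
        intro h0
        rw [ZMod.natCast_eq_zero_iff] at h0
        have := (Nat.prime_dvd_prime_iff_eq hq' hp).1 h0
        subst this
        exact hpS hq
      refine ⟨(b - h) / p, fun m hm hmeq => hb _ hm ?_⟩
      push_cast
      rw [hmeq]
      field_simp
      ring
    have h1 := qd_biUnion_le hμ ((Finset.range p).erase a.val)
      (fun h => (fun x => x + h) '' ((fun x => p * x) '' Z h))
    rw [← hdec] at h1
    refine h1.trans ?_
    have h2 : ∀ h ∈ (Finset.range p).erase a.val,
        μ ((fun x => x + h) '' ((fun x => p * x) '' Z h)) ≤ (∏ p ∈ S, (1 - (p : ℝ)⁻¹)) / p := by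
      intro h _
      rw [hμ.2.2.2.2, hμ.2.2.2.1 _ _ hp.pos]
      have := hZ h
      gcongr
    refine (Finset.sum_le_card_nsmul _ _ _ h2).trans ?_
    rw [Finset.card_erase_of_mem (Finset.mem_range.2 (ZMod.val_lt a)), Finset.card_range,
      nsmul_eq_mul, Nat.cast_sub hp.one_le, Finset.prod_insert hpS]
    apply le_of_eq
    push_cast
    field_simp

end Density

theorem finite_eval_eq (F : Polynomial ℤ) (hF : 0 < F.natDegree) (c : ℤ) :
    {k : ℕ | F.eval (k : ℤ) = c}.Finite := by
  have hne : F - Polynomial.C c ≠ 0 := by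
    intro h
    rw [sub_eq_zero] at h
    rw [h, Polynomial.natDegree_C] at hF
    exact lt_irrefl _ hF
  have := Polynomial.finite_setOfPred_isRoot hne
  refine (this.preimage (f := fun k : ℕ => (k : ℤ)) (Nat.cast_injective.injOn)).subset ?_
  intro k hk
  simp only [Set.mem_ofPred_eq] at hk
  simp [Polynomial.IsRoot, hk]

/-- For a non-constant polynomial F with integer coefficients, the set of
k ∈ ℕ such that F(k) is a prime of ℤ is small. -/
theorem smallSet_polynomial_prime_preimage (F : Polynomial ℤ)
    (hF : 0 < F.natDegree) :
    SmallSet {k : ℕ | Prime (Polynomial.eval (k : ℤ) F)} := by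
  classical
  intro μ hμ
  set X := {k : ℕ | Prime (Polynomial.eval (k : ℤ) F)} with hX
  set Q := {p : ℕ | p.Prime ∧ ∃ h : ℕ, (p : ℤ) ∣ F.eval (h : ℤ)} with hQ
  have key : ∀ S : Finset ℕ, (∀ p ∈ S, p ∈ Q) → μ X ≤ ∏ p ∈ S, (1 - (p : ℝ)⁻¹) := by
    intro S hS
    let E : Set ℕ := ⋃ p ∈ S, ({k : ℕ | F.eval (k : ℤ) = p} ∪ {k : ℕ | F.eval (k : ℤ) = -p})
    have hE : E.Finite := by
      refine Set.Finite.biUnion S.finite_toSet fun p _ => ?_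
      exact (finite_eval_eq F hF p).union (finite_eval_eq F hF (-p))
    have h1 := hμ.2.2.1 (X ∩ E) (X \ E)
    rw [Set.inter_union_sdiff, qd_finite hμ _ (hE.inter_of_right X), zero_add] at h1
    refine h1.trans (qd_avoid_le hμ S (fun p hp => (hS p hp).1) _ fun p hp => ?_)
    obtain ⟨hpp, h, hh⟩ := hS p hp
    refine ⟨h, fun y hy heq => hy.2 ?_⟩
    have hmod : (y : ℤ) ≡ h [ZMOD p] := by
      rw [← ZMod.intCast_eq_intCast_iff]
      exact_mod_cast heq
    have hdvd : (p : ℤ) ∣ F.eval (y : ℤ) := by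
      have h3 := Polynomial.sub_dvd_eval_sub (y : ℤ) (h : ℤ) F
      have h4 : (p : ℤ) ∣ (y : ℤ) - h := hmod.symm.dvd
      have h5 := h4.trans h3
      exact (dvd_sub_left hh).1 h5
    have hass := ((Nat.prime_iff_prime_int.1 hpp).dvd_prime_iff_associated hy.1).1 hdvd
    rw [Int.associated_iff] at hass
    simp only [E, Set.mem_iUnion]
    refine ⟨p, hp, ?_⟩
    rcases hass with h | h
    · left; exact h.symm
    · right
      change F.eval (y : ℤ) = -p
      omega
  have key2 : ∀ S : Finset ℕ, (∀ p ∈ S, p ∈ Q) → μ X ≤ Real.exp (-∑ p ∈ S, (p : ℝ)⁻¹) := by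
    intro S hS
    refine (key S hS).trans ?_
    rw [← Finset.sum_neg_distrib, Real.exp_sum]
    refine Finset.prod_le_prod (fun p hp => ?_) (fun p hp => ?_)
    · have : (1 : ℝ) ≤ p := by exact_mod_cast (hS p hp).1.one_le
      have := inv_le_one_of_one_le₀ this
      linarith
    · have := Real.add_one_le_exp (-(p : ℝ)⁻¹)
      linarith
  by_contra hne
  have hpos : 0 < μ X := lt_of_le_of_ne (qd_nonneg hμ X) (Ne.symm hne)
  apply not_summable_F F hF
  refine summable_of_sum_le (c := - Real.log (μ X))
    (fun p => Set.indicator_nonneg (fun _ _ => by positivity) p) fun u => ?_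
  have h1 : ∑ p ∈ u, Set.indicator Q (fun p : ℕ => ((p : ℝ))⁻¹) p =
      ∑ p ∈ u.filter (fun p => p ∈ Q), ((p : ℝ))⁻¹ := by
    rw [Finset.sum_filter]
    refine Finset.sum_congr rfl fun p _ => ?_
    rw [Set.indicator_apply]
  rw [h1]
  have h2 := key2 (u.filter (fun p => p ∈ Q)) (fun p hp => (Finset.mem_filter.1 hp).2)
  have h3 := Real.log_le_log hpos h2
  rw [Real.log_exp] at h3
  linarith
end

section
/- Let a, b, c ∈ ℕ and set D := b² − 4ac ∈ ℤ and X := { a x² + b x y + c y² : x, y ∈ ℕ }. If D = 0 or D is not a perfect square (i.e., D ≠ z² for every z ∈ ℤ), then X is small. -/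
open Set Filter Topology

section Helpers

open scoped NumberTheorySymbols

lemma exists_jacobi_aux (D : ℤ) (h0 : D ≠ 0) (hD : ∀ z : ℤ, D ≠ z ^ 2) :
    ∃ h : ℕ, Odd h ∧ jacobiSym D h = -1 := by
  obtain ⟨ε, hε, hDε⟩ : ∃ ε : ℤ, (ε = 1 ∨ ε = -1) ∧ D = ε * (D.natAbs : ℤ) := by
    rcases Int.natAbs_eq D with h | h
    · exact ⟨1, Or.inl rfl, by rw [one_mul]; exact h⟩
    · exact ⟨-1, Or.inr rfl, by rw [neg_one_mul]; exact h⟩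
  have hn0 : 0 < D.natAbs := Int.natAbs_pos.mpr h0
  generalize D.natAbs = n at *
  obtain ⟨a, b, ha, hb, hab, hsq⟩ := Nat.sq_mul_squarefree_of_pos hn0
  by_cases ha1 : a = 1
  · subst ha1
    rcases hε with rfl | rfl
    · exact absurd (by rw [hDε, ← hab]; push_cast; ring) (hD b)
    · have h1 : 1 ≤ b ^ 2 := Nat.one_le_pow _ _ hb
      have hodd : Odd (4 * b ^ 2 - 1) := ⟨2 * b ^ 2 - 1, by omega⟩
      refine ⟨4 * b ^ 2 - 1, hodd, ?_⟩
      have hcop : Int.gcd (b : ℤ) ((4 * b ^ 2 - 1 : ℕ) : ℤ) = 1 := by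
        rw [Int.gcd_natCast_natCast]
        apply Nat.Coprime.symm
        have : Nat.Coprime (4 * b ^ 2 - 1) (4 * b ^ 2) := by
          have := Nat.coprime_self_add_right (m := 4 * b ^ 2 - 1) (n := 1)
          rw [Nat.sub_add_cancel (by omega)] at this
          rw [this]; exact Nat.coprime_one_right _
        exact this.coprime_dvd_right (Dvd.intro (4 * b) (by ring))
      rw [hDε, ← hab]
      push_cast
      rw [mul_one, jacobiSym.mul_left, jacobiSym.pow_left, jacobiSym.sq_one hcop, mul_one, jacobiSym.at_neg_one hodd,
        ZMod.χ₄_nat_three_mod_four (by omega)]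
  · obtain ⟨l, hl, m, hm⟩ := Nat.exists_prime_and_dvd ha1
    have hlm : ¬ l ∣ m := by
      rintro ⟨t, rfl⟩
      have := hsq l ⟨t, by rw [hm]; ring⟩
      exact hl.one_lt.ne' (Nat.isUnit_iff.mp this)
    obtain ⟨k, b', hb', hbb⟩ := Nat.exists_eq_pow_mul_and_not_dvd hb.ne' l hl.ne_one
    obtain ⟨M, hM⟩ : ∃ M, M = b' ^ 2 * m := ⟨_, rfl⟩
    have hlM : ¬ l ∣ M := by
      rw [hM, hl.dvd_mul]
      rintro (h | h)
      · exact hb' (hl.dvd_of_dvd_pow h)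
      · exact hlm h
    have hn : n = l ^ (2 * k + 1) * M := by
      rw [← hab, hbb, hm, hM]; ring
    have hM0 : M ≠ 0 := by rintro rfl; simp at hlM
    have hDe : D = (ε * M) * (l : ℤ) ^ (2 * k + 1) := by rw [hDε, hn]; push_cast; ring
    have hcop : Nat.Coprime l M := (Nat.Prime.coprime_iff_not_dvd hl).mpr hlM
    have key : ∀ h : ℕ, Odd h → J(ε * M | h) = 1 → J((l : ℤ) | h) = -1 → J(D | h) = -1 := by
      intro h _ h1 h2
      rw [hDe, jacobiSym.mul_left, jacobiSym.pow_left, h1, h2, one_mul, pow_succ, pow_mul]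
      norm_num
    rcases hl.eq_two_or_odd' with rfl | hlo
    · have hMo : Odd M := by rw [← Nat.not_even_iff_odd, even_iff_two_dvd]; exact hlM
      have c8 : Nat.Coprime 8 M := by
        have := Nat.Coprime.pow_left 3 hcop
        simpa using this
      obtain ⟨h, h8, hM1⟩ := Nat.chineseRemainder c8 5 1
      have h8' : h % 8 = 5 := h8
      have hodd : Odd h := by rw [Nat.odd_iff]; omega
      refine ⟨h, hodd, key h hodd ?_ ?_⟩
      · rw [jacobiSym.mul_left, jacobiSym.quadratic_reciprocity_one_mod_four' hMo (by omega)]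
        have e1 : J((h : ℤ) | M) = 1 := by
          rw [jacobiSym.mod_left' (a₂ := 1) (by exact_mod_cast hM1), jacobiSym.one_left]
        have e2 : J(ε | h) = 1 := by
          rcases hε with rfl | rfl
          · exact jacobiSym.one_left _
          · rw [jacobiSym.at_neg_one hodd, ZMod.χ₄_nat_one_mod_four (by omega)]
        rw [e1, e2, one_mul]
      · have := jacobiSym.at_two hodd
        push_cast
        rw [this, ZMod.χ₈_nat_eq_if_mod_eight]
        have : ¬ (h % 8 = 1 ∨ h % 8 = 7) := by omega
        simp [h8']; omega
    · have hl2 : l ≠ 2 := by rintro rfl; exact absurd hlo (by decide)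
      have := Fact.mk hl
      obtain ⟨r, hr⟩ := FiniteField.exists_nonsquare (F := ZMod l) (by rw [ZMod.ringChar_zmod_n]; exact hl2)
      have c4 : Nat.Coprime (4 * M) l := by
        apply Nat.Coprime.mul_left _ hcop.symm
        have : Nat.Coprime (2 ^ 2) l := Nat.Coprime.pow_left 2 (Nat.coprime_two_left.mpr hlo)
        simpa using this
      obtain ⟨h, h4, hlr⟩ := Nat.chineseRemainder c4 1 r.val
      have h4' : h % 4 = 1 := by
        have : h ≡ 1 [MOD 4] := h4.of_mul_right M
        exact this
      have hodd : Odd h := by rw [Nat.odd_iff]; omega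
      refine ⟨h, hodd, key h hodd ?_ ?_⟩
      · have hna : (ε * M).natAbs = M := by rcases hε with rfl | rfl <;> simp
        rw [jacobiSym.mod_right _ hodd, hna, h4, Nat.mod_eq_of_lt (by omega)]
        exact jacobiSym.one_right _
      · rw [jacobiSym.quadratic_reciprocity_one_mod_four' hlo h4', ← jacobiSym.legendreSym.to_jacobiSym,
          legendreSym.eq_neg_one_iff]
        have : ((h : ℤ) : ZMod l) = r := by
          have := (ZMod.natCast_eq_natCast_iff _ _ _).mpr hlr
          rw [ZMod.natCast_zmod_val] at this
          exact_mod_cast this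
        rw [this]; exact hr

open ArithmeticFunction vonMangoldt in
lemma not_summable_primes_AP {q : ℕ} [NeZero q] {a : ZMod q} (ha : IsUnit a) :
    ¬ Summable (indicator {p : ℕ | p.Prime ∧ (p : ZMod q) = a} (fun n : ℕ ↦ (1 : ℝ) / n)) := by
  intro H
  obtain ⟨C, hC⟩ := LSeries_residueClass_lower_bound ha
  have hb := (summable_residueClass_non_primes_div a).add H
  have hlim : Tendsto (fun x : ℝ => ∑' n : ℕ, (x - 1) * (residueClass a n / (n : ℝ) ^ x)) (𝓝[>] 1)
      (𝓝 (∑' n : ℕ, (0 : ℝ))) := by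
    refine tendsto_tsum_of_dominated_convergence hb ?_ ?_
    · intro n
      rcases n.eq_zero_or_pos with rfl | hn
      · simp
      have hn' : (n : ℝ) ≠ 0 := by positivity
      have : ContinuousAt (fun x : ℝ => (x - 1) * (residueClass a n / (n : ℝ) ^ x)) 1 := by
        refine ContinuousAt.mul (by fun_prop) (ContinuousAt.div continuousAt_const ?_ ?_)
        · exact Real.continuousAt_const_rpow hn'
        · positivity
      have h2 := this.tendsto
      simp only [sub_self, zero_mul] at h2
      exact h2.mono_left nhdsWithin_le_nhds
    · have hmem : Ioc (1 : ℝ) 2 ∈ 𝓝[>] (1 : ℝ) := Ioc_mem_nhdsGT (by norm_num)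
      filter_upwards [hmem] with x hx n
      have hx1 : 0 < x - 1 := by linarith [hx.1]
      rcases n.eq_zero_or_pos with rfl | hn
      · simpa using indicator_nonneg (fun _ _ => by positivity) _
      have hn' : (0 : ℝ) < n := by positivity
      have hn1 : (1 : ℝ) ≤ n := by exact_mod_cast hn
      have hr := residueClass_nonneg a n
      rw [Real.norm_of_nonneg (by positivity)]
      have hpow : (n : ℝ) ^ x = n * (n : ℝ) ^ (x - 1) := by
        rw [← Real.rpow_one_add' hn'.le (by linarith)]; congr 1; ring
      have hp1 : 1 ≤ (n : ℝ) ^ (x - 1) := Real.one_le_rpow hn1 hx1.le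
      by_cases hp : n.Prime
      · simp only [hp, if_true, zero_div, zero_add]
        by_cases hna : (n : ZMod q) = a
        · rw [indicator_of_mem (show n ∈ {p : ℕ | p.Prime ∧ (p : ZMod q) = a} from ⟨hp, hna⟩)]
          have e : residueClass a n = Real.log n := by
            rw [residueClass, indicator_of_mem (show n ∈ {n : ℕ | (n : ZMod q) = a} from hna), vonMangoldt_apply_prime hp]
          rw [e, hpow]
          have hlog := Real.log_le_rpow_div hn'.le hx1
          rw [le_div_iff₀ hx1] at hlog
          rw [← mul_div_assoc, div_le_div_iff₀ (by positivity) hn']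
          nlinarith
        · have e : residueClass a n = 0 := by
            rw [residueClass, indicator_of_notMem (show n ∉ {n : ℕ | (n : ZMod q) = a} from hna)]
          rw [e, zero_div, mul_zero]
          exact indicator_nonneg (fun _ _ => by positivity) _
      · simp only [hp, if_false]
        rw [indicator_of_notMem (show n ∉ {p : ℕ | p.Prime ∧ (p : ZMod q) = a} from fun h => hp h.1), add_zero]
        calc (x - 1) * (residueClass a n / (n : ℝ) ^ x) ≤ 1 * (residueClass a n / n) := by
              apply mul_le_mul (by linarith [hx.2]) _ (by positivity) (by norm_num)
              apply div_le_div_of_nonneg_left hr hn'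
              rw [hpow]; nlinarith
          _ = _ := one_mul _
  simp only [tsum_zero, tsum_mul_left] at hlim
  have hq : 0 < (q.totient : ℝ)⁻¹ := inv_pos.mpr (mod_cast q.totient.pos_of_neZero)
  have hlim2 : Tendsto (fun x : ℝ => (q.totient : ℝ)⁻¹ - C * (x - 1)) (𝓝[>] 1) (𝓝 (q.totient : ℝ)⁻¹) := by
    have : Continuous (fun x : ℝ => (q.totient : ℝ)⁻¹ - C * (x - 1)) := by fun_prop
    have := (this.tendsto 1).mono_left (nhdsWithin_le_nhds (s := Ioi 1))
    simpa using this
  have hle : (q.totient : ℝ)⁻¹ ≤ 0 := by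
    refine le_of_tendsto_of_tendsto hlim2 hlim ?_
    filter_upwards [Ioc_mem_nhdsGT (show (1 : ℝ) < 2 by norm_num)] with x hx
    have hx1 : 0 < x - 1 := by linarith [hx.1]
    have := mul_le_mul_of_nonneg_left (hC hx) hx1.le
    refine le_trans (le_of_eq ?_) this
    field_simp
  linarith

end Helpers

/-- Number of residues modulo `k` hit by `X`. -/
noncomputable def resCount (k : ℕ) (X : Set ℕ) : ℕ := ((fun x => x % k) '' X).ncard

lemma resImage_finite {k : ℕ} (hk : 0 < k) (X : Set ℕ) : ((fun x => x % k) '' X).Finite := by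
  refine (Set.finite_Iio k).subset ?_
  rintro _ ⟨x, _, rfl⟩
  exact Nat.mod_lt _ hk

lemma resCount_mul_le {m k : ℕ} (hm : 0 < m) (hk : 0 < k) (h : Nat.Coprime m k) (X : Set ℕ) :
    resCount (m * k) X ≤ resCount m X * resCount k X := by
  unfold resCount
  rw [← Set.ncard_prod]
  refine Set.ncard_le_ncard_of_injOn (fun x => (x % m, x % k)) ?_ ?_
    ((resImage_finite hm X).prod (resImage_finite hk X))
  · rintro _ ⟨x, hx, rfl⟩
    refine ⟨⟨x, hx, ?_⟩, ⟨x, hx, ?_⟩⟩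
    · simp [Nat.mod_mul_right_mod]
    · simp [Nat.mod_mul_left_mod]
  · rintro _ ⟨x, hx, rfl⟩ _ ⟨y, hy, rfl⟩ hxy
    simp only [Prod.mk.injEq, Nat.mod_mul_right_mod, Nat.mod_mul_left_mod] at hxy
    exact (Nat.modEq_and_modEq_iff_modEq_mul h).mp ⟨hxy.1, hxy.2⟩

lemma resCount_one_le (X : Set ℕ) : resCount 1 X ≤ 1 := by
  unfold resCount
  refine (Set.ncard_le_ncard (t := {0}) ?_).trans (by simp)
  rintro _ ⟨x, _, rfl⟩
  simp [Nat.mod_one]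

lemma resCount_prod_le (s : Finset ℕ) (hs : ∀ p ∈ s, p.Prime) (X : Set ℕ) :
    resCount (∏ p ∈ s, p ^ 2) X ≤ ∏ p ∈ s, resCount (p ^ 2) X := by
  induction s using Finset.induction_on with
  | empty => simpa using resCount_one_le X
  | insert p s hp ih =>
    rw [Finset.prod_insert hp, Finset.prod_insert hp]
    have hpp := hs p (Finset.mem_insert_self _ _)
    have hs' : ∀ p ∈ s, p.Prime := fun r hr => hs r (Finset.mem_insert_of_mem hr)
    refine (resCount_mul_le (pow_pos hpp.pos 2)
      (Finset.prod_pos fun r hr => pow_pos (hs' r hr).pos 2) ?_ X).trans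
      (Nat.mul_le_mul_left _ (ih hs'))
    refine Nat.Coprime.prod_right fun r hr => Nat.Coprime.pow 2 2 ?_
    refine (Nat.coprime_primes hpp (hs' r hr)).mpr ?_
    rintro rfl
    exact hp hr

lemma quasi_le_resCount {μ : Set ℕ → ℝ} (hμ : IsUpperQuasiDensity μ) {k : ℕ} (hk : 0 < k)
    (X : Set ℕ) : μ X ≤ resCount k X / k := by
  obtain ⟨h1, h2, h3, h4, h5⟩ := hμ
  have hempty : μ ∅ = 0 := by
    have := h4 ∅ 2 (by norm_num)
    simp at this
    linarith
  have hfin := resImage_finite hk X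
  have hpiece : ∀ h : ℕ, μ {x ∈ X | x % k = h} ≤ 1 / k := by
    intro h
    have e : {x ∈ X | x % k = h} =
        (fun x => x + h) '' ((fun x => k * x) '' {m | k * m + h ∈ X ∧ h < k}) := by
      ext x
      simp only [mem_ofPred_eq, mem_image, exists_exists_and_eq_and]
      constructor
      · rintro ⟨hx, rfl⟩
        exact ⟨x / k, ⟨by rwa [Nat.div_add_mod], Nat.mod_lt _ hk⟩, Nat.div_add_mod _ _⟩
      · rintro ⟨m, ⟨hm, hh⟩, rfl⟩
        refine ⟨hm, ?_⟩
        rw [Nat.mul_add_mod, Nat.mod_eq_of_lt hh]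
    rw [e, h5, h4 _ _ hk]
    gcongr
    exact h2 _
  have hsum : ∀ T : Finset ℕ, μ {x ∈ X | x % k ∈ T} ≤ T.card * (1 / k) := by
    intro T
    induction T using Finset.induction_on with
    | empty => simp [hempty]
    | insert t T ht ih =>
      have e : {x ∈ X | x % k ∈ insert t T} = {x ∈ X | x % k = t} ∪ {x ∈ X | x % k ∈ T} := by
        ext x
        simp only [Finset.mem_insert, mem_ofPred_eq, mem_union]
        tauto
      rw [e, Finset.card_insert_of_notMem ht]
      push_cast
      linarith [h3 {x ∈ X | x % k = t} {x ∈ X | x % k ∈ T}, hpiece t]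
  have := hsum hfin.toFinset
  have e : {x ∈ X | x % k ∈ hfin.toFinset} = X := by
    ext x
    simp only [Set.Finite.mem_toFinset, mem_ofPred_eq, and_iff_left_iff_imp]
    exact fun hx => ⟨x, hx, rfl⟩
  rw [e, ← Set.ncard_eq_toFinset_card _ hfin] at this
  rw [div_eq_mul_one_div]
  exact this

lemma resCount_sq_le {p : ℕ} (hp : p.Prime) {X : Set ℕ} (hX : ∀ n ∈ X, p ∣ n → p ^ 2 ∣ n) :
    resCount (p ^ 2) X + (p - 1) ≤ p ^ 2 := by
  have hinj : Function.Injective (fun j : ℕ => p * j) := fun i j h => Nat.eq_of_mul_eq_mul_left hp.pos h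
  have hB : ((fun j : ℕ => p * j) '' Ioo 0 p).ncard = p - 1 := by
    rw [Set.ncard_image_of_injective _ hinj, ← Finset.coe_Ioo, Set.ncard_coe_finset, Nat.card_Ioo]; simp
  have hfin := resImage_finite (pow_pos hp.pos 2) X
  have hBfin : ((fun j : ℕ => p * j) '' Ioo 0 p).Finite := (Set.finite_Ioo _ _).image _
  unfold resCount
  rw [← hB, ← Set.ncard_union_eq _ hfin hBfin]
  · refine (Set.ncard_le_ncard (t := ((Finset.range (p ^ 2) : Finset ℕ) : Set ℕ)) ?_).trans ?_
    · rintro _ (⟨x, _, rfl⟩ | ⟨j, hj, rfl⟩)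
      · simpa using Nat.mod_lt _ (pow_pos hp.pos 2)
      · have := hj.2
        simp only [Finset.coe_range, mem_Iio]
        rw [sq]
        exact Nat.mul_lt_mul_of_pos_left this hp.pos
    · rw [Set.ncard_coe_finset, Finset.card_range]
  · rw [Set.disjoint_left]
    rintro _ ⟨x, hx, rfl⟩ ⟨j, hj, hjx⟩
    simp only at hjx
    have hdvd : p ∣ x := by
      have h1 : p ∣ x % p ^ 2 := ⟨j, hjx.symm⟩
      exact (Nat.dvd_mod_iff (dvd_pow_self p two_ne_zero)).mp h1
    have h2 := Nat.mod_eq_zero_of_dvd (hX x hx hdvd)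
    rw [h2] at hjx
    rcases Nat.mul_eq_zero.mp hjx with h | h
    · exact hp.pos.ne' h
    · exact hj.1.ne' h

lemma small_of_primes {X : Set ℕ} {P : Set ℕ} (hP : ∀ p ∈ P, p.Prime)
    (hns : ¬ Summable (indicator P (fun n : ℕ ↦ (1 : ℝ) / n)))
    (hX : ∀ p ∈ P, ∀ n ∈ X, p ∣ n → p ^ 2 ∣ n) : SmallSet X := by
  classical
  intro μ hμ
  have hnonneg : 0 ≤ μ X := by
    have := hμ.2.2.1 X X
    rw [Set.union_self] at this
    linarith
  have hbound : ∀ s : Finset ℕ, μ X ≤ Real.exp (-(∑ n ∈ s, indicator P (fun n : ℕ ↦ (1 : ℝ) / n) n) / 2) := by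
    intro s
    have hs : ∀ p ∈ s.filter (· ∈ P), p ∈ P := fun p hp => (Finset.mem_filter.mp hp).2
    have e : ∑ n ∈ s, indicator P (fun n : ℕ ↦ (1 : ℝ) / n) n = ∑ n ∈ s.filter (· ∈ P), (1 : ℝ) / n := by
      rw [Finset.sum_filter]
      rfl
    rw [e]
    generalize s.filter (· ∈ P) = t at hs
    have hpos : 0 < ∏ p ∈ t, p ^ 2 := Finset.prod_pos fun p hp => pow_pos (hP p (hs p hp)).pos 2
    refine (quasi_le_resCount hμ hpos X).trans ?_
    have h1 : (resCount (∏ p ∈ t, p ^ 2) X : ℝ) ≤ ∏ p ∈ t, (resCount (p ^ 2) X : ℝ) := by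
      exact_mod_cast resCount_prod_le t (fun p hp => hP p (hs p hp)) X
    calc _ ≤ (∏ p ∈ t, (resCount (p ^ 2) X : ℝ)) / ((∏ p ∈ t, p ^ 2 : ℕ) : ℝ) := by gcongr
      _ = ∏ p ∈ t, ((resCount (p ^ 2) X : ℝ) / (p : ℝ) ^ 2) := by
        push_cast
        rw [Finset.prod_div_distrib]
      _ ≤ ∏ p ∈ t, Real.exp (-(1 / (p : ℝ)) / 2) := by
        refine Finset.prod_le_prod (fun _ _ => by positivity) fun p hp => ?_
        have hpp := hP p (hs p hp)
        have h2 := resCount_sq_le hpp (hX p (hs p hp))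
        have h2' : (resCount (p ^ 2) X : ℝ) + (p - 1) ≤ (p : ℝ) ^ 2 := by
          have : ((p - 1 : ℕ) : ℝ) = p - 1 := by rw [Nat.cast_sub hpp.one_le]; simp
          rw [← this]
          exact_mod_cast h2
        have hp2 : (2 : ℝ) ≤ p := by exact_mod_cast hpp.two_le
        have h3 := Real.add_one_le_exp (-(1 / (p : ℝ)) / 2)
        refine le_trans ?_ h3
        rw [div_le_iff₀ (by positivity)]
        have : (-(1 / (p : ℝ)) / 2 + 1) * (p : ℝ) ^ 2 = p ^ 2 - p / 2 := by
          field_simp; ring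
        rw [this]
        linarith
      _ = _ := by
        rw [← Real.exp_sum, ← Finset.sum_div, Finset.sum_neg_distrib]
  by_contra hne
  have hpos : 0 < μ X := lt_of_le_of_ne hnonneg (Ne.symm hne)
  apply hns
  refine summable_of_sum_le (c := -2 * Real.log (μ X)) (fun n => indicator_nonneg (fun _ _ => by positivity) n) fun s => ?_
  have := Real.log_le_log hpos (hbound s)
  rw [Real.log_exp] at this
  linarith

/-- If D = b² - 4ac is zero or not a perfect square, then the set of values of
the binary quadratic form ax² + bxy + cy² over ℕ is small. -/
theorem smallSet_binary_quadratic_form (a b c : ℕ)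
    (hD : (b : ℤ) ^ 2 - 4 * a * c = 0 ∨ ∀ z : ℤ, (b : ℤ) ^ 2 - 4 * a * c ≠ z ^ 2) :
    SmallSet {n : ℕ | ∃ x y : ℕ, n = a * x ^ 2 + b * x * y + c * y ^ 2} := by
  rcases hD with hD | hD
  · obtain ⟨A, hA, hsq⟩ : ∃ A : ℕ, 0 < A ∧ ∀ n ∈ {n : ℕ | ∃ x y : ℕ, n = a * x ^ 2 + b * x * y + c * y ^ 2},
        ∃ t : ℕ, 4 * A * n = t ^ 2 := by
      have hD' : b ^ 2 = 4 * a * c := by zify; linarith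
      rcases Nat.eq_zero_or_pos a with rfl | ha
      · have hb : b = 0 := by simpa using hD'
        subst hb
        rcases Nat.eq_zero_or_pos c with rfl | hc
        · refine ⟨1, one_pos, ?_⟩
          rintro n ⟨x, y, rfl⟩
          exact ⟨0, by simp⟩
        · refine ⟨c, hc, ?_⟩
          rintro n ⟨x, y, rfl⟩
          exact ⟨2 * c * y, by ring⟩
      · refine ⟨a, ha, ?_⟩
        rintro n ⟨x, y, rfl⟩
        refine ⟨2 * a * x + b * y, ?_⟩
        zify at hD' ⊢
        linear_combination (-(y : ℤ) ^ 2) * hD'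
    have : NeZero (4 * A) := ⟨by omega⟩
    refine small_of_primes (P := {p : ℕ | p.Prime ∧ (p : ZMod (4 * A)) = 1}) (fun p hp => hp.1)
      (not_summable_primes_AP isUnit_one) ?_
    rintro p ⟨hp, hp1⟩ n hn hpn
    obtain ⟨t, ht⟩ := hsq n hn
    have hcop : Nat.Coprime p (4 * A) := by
      rw [← ZMod.isUnit_iff_coprime, hp1]
      exact isUnit_one
    have hpt : p ∣ t := hp.dvd_of_dvd_pow (n := 2) (ht ▸ Dvd.dvd.mul_left hpn _)
    have h2 : p ^ 2 ∣ 4 * A * n := ht ▸ pow_dvd_pow_of_dvd hpt 2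
    exact (Nat.Coprime.pow_left 2 hcop).dvd_of_dvd_mul_left h2
  · obtain ⟨D, hDdef⟩ : ∃ D : ℤ, D = (b : ℤ) ^ 2 - 4 * a * c := ⟨_, rfl⟩
    rw [← hDdef] at hD
    have hD0 : D ≠ 0 := by simpa using hD 0
    obtain ⟨h, hodd, hJ⟩ := exists_jacobi_aux D hD0 hD
    have hna : D.natAbs ≠ 0 := Int.natAbs_ne_zero.mpr hD0
    have : NeZero (4 * D.natAbs) := ⟨by omega⟩
    have hunit : IsUnit (h : ZMod (4 * D.natAbs)) := by
      rw [ZMod.isUnit_iff_coprime]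
      refine Nat.Coprime.mul_right ?_ ?_
      · have : Nat.Coprime h (2 ^ 2) := Nat.Coprime.pow_right 2 (Nat.coprime_two_right.mpr hodd)
        simpa using this
      · have h0 : NeZero h := ⟨by rintro rfl; exact absurd hodd (by decide)⟩
        have hne : jacobiSym D h ≠ 0 := by rw [hJ]; norm_num
        have hg : D.gcd h = 1 := by
          by_contra hg
          exact hne (jacobiSym.eq_zero_iff_not_coprime.mpr hg)
        rw [Nat.coprime_comm]
        exact hg
    refine small_of_primes (P := {p : ℕ | p.Prime ∧ (p : ZMod (4 * D.natAbs)) = h}) (fun p hp => hp.1)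
      (not_summable_primes_AP hunit) ?_
    rintro p ⟨hp, hph⟩ n ⟨x, y, rfl⟩ hpn
    have hmod : p ≡ h [MOD 4 * D.natAbs] := (ZMod.natCast_eq_natCast_iff _ _ _).mp hph
    have hpodd : Odd p := by
      have h4 : p ≡ h [MOD 4] := hmod.of_mul_right _
      have h4' : p % 4 = h % 4 := h4
      rw [Nat.odd_iff] at hodd ⊢
      omega
    have hJp : jacobiSym D p = -1 := by
      rw [jacobiSym.mod_right D hpodd, hmod, ← jacobiSym.mod_right D hodd, hJ]
    have hpf : Fact p.Prime := ⟨hp⟩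
    have hpi : Prime (p : ℤ) := Nat.prime_iff_prime_int.mp hp
    have hpa : ¬ (p : ℤ) ∣ a := by
      rintro ⟨u, hu⟩
      have hd : (p : ℤ) ∣ (b : ℤ) ^ 2 - D * 1 ^ 2 := ⟨4 * u * c, by rw [hDdef, hu]; ring⟩
      have := (jacobiSym.prime_dvd_of_eq_neg_one hJp hd).2
      exact hpi.not_dvd_one this
    have hp2 : ¬ (p : ℤ) ∣ 2 := by
      intro h2
      have h2' : p ∣ 2 := by exact_mod_cast h2
      rw [(Nat.prime_dvd_prime_iff_eq hp Nat.prime_two).mp h2'] at hpodd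
      exact absurd hpodd (by decide)
    have hpn' : (p : ℤ) ∣ (a : ℤ) * x ^ 2 + b * x * y + c * y ^ 2 := by exact_mod_cast hpn
    have hd : (p : ℤ) ∣ (2 * a * x + b * y : ℤ) ^ 2 - D * (y : ℤ) ^ 2 := by
      obtain ⟨u, hu⟩ := hpn'
      exact ⟨4 * a * u, by rw [hDdef]; linear_combination (4 * a : ℤ) * hu⟩
    obtain ⟨hd1, hd2⟩ := jacobiSym.prime_dvd_of_eq_neg_one hJp hd
    have hd3 : (p : ℤ) ∣ 2 * a * x := (Int.dvd_add_left (hd2.mul_left _)).mp hd1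
    have hpx : (p : ℤ) ∣ x := by
      rcases hpi.dvd_or_dvd hd3 with h1 | h1
      · rcases hpi.dvd_or_dvd h1 with h1 | h1
        · exact absurd h1 hp2
        · exact absurd h1 hpa
      · exact h1
    obtain ⟨u, rfl⟩ : p ∣ x := by exact_mod_cast hpx
    obtain ⟨v, rfl⟩ : p ∣ y := by exact_mod_cast hd2
    exact ⟨a * u ^ 2 + b * u * v + c * v ^ 2, by ring⟩
end
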